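/- arXiv:1911.01210 — 2 statements merged into one kernel-verified Lean document; each statement's English description precedes it below -/
import Mathlib

section
/- In W = ⋀²M with e := Σ_{i∈ℤ/5} fᵢ ∧ f_{i+1}: the 5-cycle (01234) fixes e, and the even permutation (14)(23) sends e to −e; the orbit of e under the alternating group A₅ has exactly 12 elements and is closed under negation (so it consists of 6 antipodal pairs); this orbit spans E₀ over ℤ; and one may choose one element from each of the 6 antipodal pairs so that the resulting 6 elements form a ℤ-basis of E₀. -/
/-!
Give the directed edge `i → j` the weight `fᵢ ∧ fⱼ` and a closed polygon the sum of the weights of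
its edges. Then `e` is the pentagon `(0,1,2,3,4)`, a permutation acts on a polygon through its
vertices, and `E₀` is spanned by the triangles. Rotating a polygon fixes its sum and reflecting it
changes the sign, so each of the six left cosets in `A₅` of the dihedral group of order 10
contributes one antipodal pair to the orbit.

Pentagons and triangles generate each other. A polygon is the sum of the triangles joining its
edges to a common apex, and conversely
`(a,b,c) = (a,b,d,c,e) + (b,c,d,a,e) + (c,a,d,b,e)`,
because the twelve edges of these pentagons that meet `d` or `e` cancel in pairs. As `A₅` is
transitive on ordered triples, the orbit spans `E₀`.

Since `∑ₖ fₖ = 0`, the triangles on a fixed edge add up to `∑ₖ (i,j,k) = 5 fᵢ ∧ fⱼ`. Hence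
`5W ⊆ E₀`, and `E₀` has the same rank `6` as `W`. Six elements spanning a module of rank six are
independent, and independence of the representatives makes the twelve elements of the orbit
distinct.
-/

/-- The line in `ℤ⁵` spanned by the constant vector `(1,1,1,1,1)`. -/
def constLine : Submodule ℤ (Fin 5 → ℤ) := Submodule.span ℤ {fun _ => 1}

/-- `M = ℤ⁵ / ℤ·(1,1,1,1,1)`. -/
abbrev Mmod := (Fin 5 → ℤ) ⧸ constLine

/-- `fᵢ`: the images in `M` of the standard basis vectors of `ℤ⁵` (indices in `ℤ/5`,
realized as `Fin 5` with its cyclic addition). -/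
def fv (i : Fin 5) : Mmod := Submodule.Quotient.mk (Pi.single i 1)

/-- The action of a permutation of the five coordinates on `M`. -/
def permM (g : Equiv.Perm (Fin 5)) : Mmod →ₗ[ℤ] Mmod :=
  Submodule.mapQ constLine constLine (LinearMap.funLeft ℤ ℤ ⇑g⁻¹) (by
    rw [constLine, Submodule.span_le, Set.singleton_subset_iff]
    exact Submodule.subset_span rfl)

open ExteriorAlgebra in
/-- `ExteriorAlgebra.map` preserves the second exterior power. -/
lemma map_mem_pow2 (f : Mmod →ₗ[ℤ] Mmod) {x : ExteriorAlgebra ℤ Mmod}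
    (hx : x ∈ ⋀[ℤ]^2 Mmod) : ExteriorAlgebra.map f x ∈ ⋀[ℤ]^2 Mmod := by
  rw [← ExteriorAlgebra.ιMulti_span_fixedDegree] at hx ⊢
  induction hx using Submodule.span_induction with
  | mem x h =>
    obtain ⟨v, rfl⟩ := h
    rw [ExteriorAlgebra.map_apply_ιMulti]
    exact Submodule.subset_span ⟨f ∘ v, rfl⟩
  | zero => simp
  | add x y _ _ hx hy => rw [map_add]; exact add_mem hx hy
  | smul c x _ hx => rw [map_zsmul]; exact Submodule.smul_mem _ _ hx

/-- `W = ⋀² M`, the second exterior power of `M` over `ℤ`. -/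
abbrev Wmod := ↥(⋀[ℤ]^2 Mmod)

/-- The wedge product `a ∧ b ∈ ⋀² M` of two elements of `M`. -/
def wedge (a b : Mmod) : Wmod :=
  ⟨ExteriorAlgebra.ιMulti ℤ 2 ![a, b], ExteriorAlgebra.ιMulti_range ℤ 2 ⟨![a, b], rfl⟩⟩

/-- The induced action of a permutation of the five coordinates on `W = ⋀² M`. -/
def mapW (g : Equiv.Perm (Fin 5)) : Wmod →ₗ[ℤ] Wmod :=
  LinearMap.restrict (ExteriorAlgebra.map (permM g)).toLinearMap
    (fun _ hx => map_mem_pow2 (permM g) hx)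

/-- `e = Σ_{i ∈ ℤ/5} fᵢ ∧ f_{i+1} ∈ W`. -/
def eW : Wmod := ∑ i : Fin 5, wedge (fv i) (fv (i + 1))

/-- `E₀ ⊆ W`: the `ℤ`-span of the elements `fᵢ∧fⱼ + fⱼ∧f_k + f_k∧fᵢ` for pairwise
distinct `i, j, k`. -/
def E0W : Submodule ℤ Wmod :=
  Submodule.span ℤ {x | ∃ i j k : Fin 5, i ≠ j ∧ j ≠ k ∧ i ≠ k ∧
    x = wedge (fv i) (fv j) + wedge (fv j) (fv k) + wedge (fv k) (fv i)}

/-- The orbit of `e` under the alternating group `A₅`. -/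
def orbE : Set Wmod := {x | ∃ g ∈ alternatingGroup (Fin 5), mapW g eW = x}

section Polygon

variable {α A : Type*} {n : ℕ} [NeZero n]

/-- The sum of `w` over the directed edges of the closed polygon with vertices
`v 0, …, v (n - 1)`, the edge leaving the last vertex returning to `v 0`. -/
def polygonSum [AddCommMonoid A] (w : α → α → A) (v : Fin n → α) : A :=
  ∑ i, w (v i) (v (i + 1))

lemma polygonSum_fin_three [AddCommMonoid A] (w : α → α → A) (v : Fin 3 → α) :
    polygonSum w v = w (v 0) (v 1) + w (v 1) (v 2) + w (v 2) (v 0) :=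
  Fin.sum_univ_three _

lemma polygonSum_fin_five [AddCommMonoid A] (w : α → α → A) (v : Fin 5 → α) :
    polygonSum w v =
      w (v 0) (v 1) + w (v 1) (v 2) + w (v 2) (v 3) + w (v 3) (v 4) + w (v 4) (v 0) :=
  Fin.sum_univ_five _

lemma polygonSum_comp_addRight [AddCommMonoid A] (w : α → α → A) (v : Fin n → α) (j : Fin n) :
    polygonSum w (v ∘ Equiv.addRight j) = polygonSum w v := by
  refine Eq.trans ?_ (Equiv.sum_comp (Equiv.addRight j) fun i => w (v i) (v (i + 1)))
  simp only [polygonSum, Function.comp_apply, Equiv.coe_addRight, add_right_comm]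

variable [AddCommGroup A] {w : α → α → A} (hw : ∀ a b, w a b = -w b a)

include hw

lemma polygonSum_comp_subLeft (v : Fin n → α) (j : Fin n) :
    polygonSum w (v ∘ Equiv.subLeft j) = -polygonSum w v := by
  rw [polygonSum, polygonSum, ← Equiv.sum_comp (Equiv.subLeft (j - 1)), ← Finset.sum_neg_distrib]
  refine Finset.sum_congr rfl fun i _ => ?_
  have htail : j - (j - 1 - i) = i + 1 := by abel
  have hhead : j - (j - 1 - i + 1) = i := by abel
  simp only [Function.comp_apply, Equiv.subLeft_apply, htail, hhead, hw (v (i + 1))]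

/-- The edges through the apex `a` cancel in pairs. -/
lemma polygonSum_eq_sum_triangles (v : Fin n → α) (a : α) :
    polygonSum w v = ∑ i, polygonSum w ![a, v i, v (i + 1)] := by
  have hspokes : ∑ i, w a (v (i + 1)) = ∑ i, w a (v i) :=
    Equiv.sum_comp (Equiv.addRight 1) fun i => w a (v i)
  rw [polygonSum]
  simp only [polygonSum_fin_three, Matrix.cons_val, hw _ a, Finset.sum_add_distrib,
    Finset.sum_neg_distrib, hspokes]
  abel

lemma polygonSum_triangle_eq_sum_pentagons (a b c d e : α) :
    polygonSum w ![a, b, c] = polygonSum w ![a, b, d, c, e] + polygonSum w ![b, c, d, a, e] +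
      polygonSum w ![c, a, d, b, e] := by
  simp only [polygonSum_fin_three, polygonSum_fin_five, Matrix.cons_val, hw d, hw e]
  abel

lemma polygonSum_triangle_eq_zero (hself : ∀ a, w a a = 0) {a b c : α}
    (h : a = b ∨ b = c ∨ c = a) : polygonSum w ![a, b, c] = 0 := by
  simp only [polygonSum_fin_three, Matrix.cons_val]
  rcases h with rfl | rfl | rfl
  · simp [hself, hw c]
  · simp [hself, hw b a]
  · simp [hself, hw c]

lemma sum_polygonSum_triangle [Fintype α] (a b : α) :
    ∑ c, polygonSum w ![a, b, c] = Fintype.card α • w a b + ∑ c, w b c - ∑ c, w a c := by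
  simp [polygonSum_fin_three, Finset.sum_add_distrib, hw _ a, sub_eq_add_neg]

end Polygon

section LinearAlgebra

variable {R V ι : Type*} [AddCommGroup V]

lemma range_inter_range_neg_eq_empty [Ring R] [NeZero (2 : R)] [Module R V] {t : ι → V}
    (ht : LinearIndependent R t) : Set.range t ∩ Set.range (fun i => -t i) = ∅ := by
  classical
  have : Nontrivial R := ⟨2, 0, two_ne_zero⟩
  rw [Set.eq_empty_iff_forall_notMem]
  rintro _ ⟨⟨i, rfl⟩, j, hij : -t j = t i⟩
  have hcomb : Finsupp.single i (1 : R) = -Finsupp.single j 1 := ht (by simp [hij])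
  have hcoeff := DFunLike.congr_fun hcomb i
  by_cases hji : j = i
  · simp [hji, eq_neg_iff_add_eq_zero, one_add_one_eq_two, two_ne_zero] at hcoeff
  · simp [hji] at hcoeff

lemma ncard_range_union_range_neg [Ring R] [NeZero (2 : R)] [Module R V] [Fintype ι] {t : ι → V}
    (ht : LinearIndependent R t) :
    (Set.range t ∪ Set.range (fun i => -t i)).ncard = 2 * Fintype.card ι := by
  have : Nontrivial R := ⟨2, 0, two_ne_zero⟩
  have hneg : Function.Injective fun i => -t i := neg_injective.comp ht.injective
  rw [Set.ncard_union_eq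
      (Set.disjoint_iff_inter_eq_empty.mpr (range_inter_range_neg_eq_empty ht))
      (Set.finite_range _) (Set.finite_range _),
    Set.ncard_range_of_injective ht.injective, Set.ncard_range_of_injective hneg,
    Nat.card_eq_fintype_card, two_mul]

lemma span_range_union_range_neg [Ring R] [Module R V] (t : ι → V) :
    Submodule.span R (Set.range t ∪ Set.range (fun i => -t i)) =
      Submodule.span R (Set.range t) := by
  have hneg : Set.range (fun i => -t i) = -Set.range t := Set.neg_range.symm
  rw [hneg, Submodule.span_union, Submodule.span_neg, sup_idem]

lemma finrank_le_finrank_of_smul_mem [CommRing R] [IsDomain R] [Module R V]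
    [Module.IsTorsionFree R V] [IsNoetherian R V] {N : Submodule R V} {r : R} (hr : r ≠ 0)
    (hN : ∀ x, r • x ∈ N) :
    Module.finrank R V ≤ Module.finrank R N :=
  LinearMap.finrank_le_finrank_of_injective
    (f := (LinearMap.lsmul R V r).codRestrict N hN)
    fun _ _ h => smul_right_injective V hr (congrArg Subtype.val h)

variable (R) (n : ℕ) [CommRing R]

/-- The differences with the first coordinate identify `Rⁿ⁺¹ / R·(1,…,1)` with `Rⁿ`. -/
noncomputable def quotientSpanOneEquiv :
    ((Fin (n + 1) → R) ⧸ Submodule.span R {fun _ : Fin (n + 1) => (1 : R)}) ≃ₗ[R] (Fin n → R) :=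
  let diff : (Fin (n + 1) → R) →ₗ[R] (Fin n → R) :=
    { toFun x i := x i.succ - x 0
      map_add' x y := by ext i; simp [add_sub_add_comm]
      map_smul' r x := by ext i; simp [mul_sub] }
  have hker : Submodule.span R {fun _ => 1} = LinearMap.ker diff := by
    ext x
    rw [Submodule.mem_span_singleton, LinearMap.mem_ker]
    constructor
    · rintro ⟨r, rfl⟩
      ext i
      simp [diff]
    · intro hx
      refine ⟨x 0, funext (Fin.cases (by simp) fun i => ?_)⟩
      simpa using (sub_eq_zero.mp (congrFun hx i)).symm
  have hsurj : Function.Surjective diff := fun y => ⟨Fin.cons 0 y, by ext i; simp [diff]⟩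
  (Submodule.quotEquivOfEq _ _ hker).trans (diff.quotKerEquivOfSurjective hsurj)

end LinearAlgebra

section Wedge

lemma wedge_self (a : Mmod) : wedge a a = 0 :=
  (exteriorPower.ιMulti ℤ 2).map_eq_zero_of_eq ![a, a] (i := 0) (j := 1) rfl (by decide)

lemma wedge_swap (a b : Mmod) : wedge a b = -wedge b a := by
  have h := (exteriorPower.ιMulti ℤ 2).map_swap ![b, a] (i := 0) (j := 1) (by decide)
  rwa [← FinVec.etaExpand_eq (![b, a] ∘ _)] at h

lemma wedge_sum_right {κ : Type*} (s : Finset κ) (a : Mmod) (b : κ → Mmod) :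
    wedge a (∑ i ∈ s, b i) = ∑ i ∈ s, wedge a (b i) := by
  have hupdate (x : Mmod) : Function.update ![a, 0] 1 x = ![a, x] :=
    (FinVec.etaExpand_eq _).symm
  have h := (exteriorPower.ιMulti ℤ 2).map_update_sum s 1 b ![a, 0]
  simp only [hupdate] at h
  exact h

lemma wedge_zero_right (a : Mmod) : wedge a 0 = 0 :=
  (exteriorPower.ιMulti ℤ 2).map_coord_zero 1 rfl

lemma fv_eq_mkQ (i : Fin 5) : fv i = constLine.mkQ (Pi.single i 1) := rfl

lemma sum_fv : ∑ i, fv i = 0 := by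
  simp only [fv_eq_mkQ]
  rw [← map_sum, Finset.univ_sum_single, Submodule.mkQ_apply, Submodule.Quotient.mk_eq_zero]
  exact Submodule.subset_span rfl

lemma span_range_fv : Submodule.span ℤ (Set.range fv) = ⊤ := by
  have hrange : Set.range fv = constLine.mkQ '' Set.range (Pi.basisFun ℤ (Fin 5)) := by
    rw [← Set.range_comp]
    congr
    ext i
    simp [fv_eq_mkQ]
  rw [hrange, Submodule.span_image, (Pi.basisFun ℤ (Fin 5)).span_eq, Submodule.map_top,
    Submodule.range_mkQ]

instance : Module.Free ℤ Mmod := .of_equiv (quotientSpanOneEquiv ℤ 4).symm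

lemma finrank_Mmod : Module.finrank ℤ Mmod = 4 :=
  (quotientSpanOneEquiv ℤ 4).finrank_eq.trans (Module.finrank_fin_fun ℤ)

lemma finrank_Wmod : Module.finrank ℤ Wmod = 6 := by
  rw [exteriorPower.finrank_eq, finrank_Mmod]
  rfl

lemma permM_fv (g : Equiv.Perm (Fin 5)) (i : Fin 5) : permM g (fv i) = fv (g i) := by
  simp only [permM, fv, Submodule.mapQ_apply]
  congr 1
  ext j
  simp only [LinearMap.funLeft_apply, Pi.single_apply, Equiv.Perm.inv_eq_iff_eq]

lemma mapW_wedge (g : Equiv.Perm (Fin 5)) (a b : Mmod) :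
    mapW g (wedge a b) = wedge (permM g a) (permM g b) :=
  Subtype.ext <| (ExteriorAlgebra.map_apply_ιMulti (permM g) ![a, b]).trans
    (congrArg _ (FinVec.map_eq _ _).symm)

end Wedge

/-- The weight `fᵢ ∧ fⱼ` of the directed edge `i → j`, whose polygon sums include `e` and the
generators of `E₀`. -/
def edge (i j : Fin 5) : Wmod := wedge (fv i) (fv j)

lemma edge_self (i : Fin 5) : edge i i = 0 := wedge_self _

lemma edge_swap (i j : Fin 5) : edge i j = -edge j i := wedge_swap _ _

lemma sum_edge (i : Fin 5) : ∑ j, edge i j = 0 := by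
  simp only [edge, ← wedge_sum_right, sum_fv, wedge_zero_right]

lemma span_range_edge : Submodule.span ℤ (Set.range fun p : Fin 5 × Fin 5 => edge p.1 p.2) = ⊤ := by
  rw [eq_top_iff, ← exteriorPower.ιMulti_span_of_span ℤ 2 _ span_range_fv, Submodule.span_le]
  rintro _ ⟨a, ha, rfl⟩
  obtain ⟨i, hi⟩ := ha ⟨0, rfl⟩
  obtain ⟨j, hj⟩ := ha ⟨1, rfl⟩
  refine Submodule.subset_span ⟨(i, j), ?_⟩
  simp only [edge, hi, hj]
  exact congrArg (exteriorPower.ιMulti ℤ 2) (FinVec.etaExpand_eq a)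

lemma mapW_polygonSum {n : ℕ} [NeZero n] (g : Equiv.Perm (Fin 5)) (v : Fin n → Fin 5) :
    mapW g (polygonSum edge v) = polygonSum edge (g ∘ v) := by
  simp only [polygonSum, edge, map_sum, mapW_wedge, permM_fv, Function.comp_apply]

lemma mapW_eW (g : Equiv.Perm (Fin 5)) : mapW g eW = polygonSum edge g :=
  mapW_polygonSum g id

lemma mapW_mul_addRight_eW (g : Equiv.Perm (Fin 5)) (j : Fin 5) :
    mapW (g * Equiv.addRight j) eW = mapW g eW := by
  rw [mapW_eW, mapW_eW, Equiv.Perm.coe_mul, polygonSum_comp_addRight]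

lemma mapW_mul_subLeft_eW (g : Equiv.Perm (Fin 5)) (j : Fin 5) :
    mapW (g * Equiv.subLeft j) eW = -mapW g eW := by
  rw [mapW_eW, mapW_eW, Equiv.Perm.coe_mul, polygonSum_comp_subLeft edge_swap]

lemma neg_mem_orbE {x : Wmod} (hx : x ∈ orbE) : -x ∈ orbE := by
  obtain ⟨g, hg, rfl⟩ := hx
  have heven : Equiv.subLeft 0 ∈ alternatingGroup (Fin 5) :=
    Equiv.Perm.mem_alternatingGroup.mpr (by decide)
  exact ⟨g * Equiv.subLeft 0, mul_mem hg heven, mapW_mul_subLeft_eW g 0⟩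

/-- Representatives of the left cosets in `A₅` of the dihedral group of the pentagon `ℤ/5`: the
identity and the left translates of a 3-cycle by the five rotations. The cosets correspond to the
six axes, i.e. the antipodal pairs in the orbit of `e`. -/
def axisPerm : Fin 6 → Equiv.Perm (Fin 5) :=
  Fin.cons 1 fun i => Equiv.addRight i * c[2, 4, 3]

lemma axisPerm_mem_alternatingGroup (m : Fin 6) : axisPerm m ∈ alternatingGroup (Fin 5) := by
  rw [Equiv.Perm.mem_alternatingGroup]
  revert m
  decide

lemma exists_eq_axisPerm_mul {g : Equiv.Perm (Fin 5)} (hg : g ∈ alternatingGroup (Fin 5)) :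
    ∃ m j, g = axisPerm m * Equiv.addRight j ∨ g = axisPerm m * Equiv.subLeft j := by
  rw [Equiv.Perm.mem_alternatingGroup] at hg
  revert g
  decide +kernel

/-- The chosen element of the antipodal pair `{x, -x}` in the orbit of `e` on the `m`-th axis. -/
def axisVector (m : Fin 6) : Wmod := mapW (axisPerm m) eW

lemma axisVector_mem_orbE (m : Fin 6) : axisVector m ∈ orbE :=
  ⟨axisPerm m, axisPerm_mem_alternatingGroup m, rfl⟩

lemma orbE_eq_range_union_range_neg :
    orbE = Set.range axisVector ∪ Set.range (fun m => -axisVector m) := by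
  refine Set.Subset.antisymm ?_ (Set.union_subset ?_ ?_)
  · rintro _ ⟨g, hg, rfl⟩
    obtain ⟨m, j, rfl | rfl⟩ := exists_eq_axisPerm_mul hg
    · exact .inl ⟨m, (mapW_mul_addRight_eW _ j).symm⟩
    · exact .inr ⟨m, (mapW_mul_subLeft_eW _ j).symm⟩
  · exact Set.range_subset_iff.mpr axisVector_mem_orbE
  · exact Set.range_subset_iff.mpr fun m => neg_mem_orbE (axisVector_mem_orbE m)

lemma polygonSum_triangle_mem_E0W (i j k : Fin 5) : polygonSum edge ![i, j, k] ∈ E0W := by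
  by_cases h : i = j ∨ j = k ∨ k = i
  · rw [polygonSum_triangle_eq_zero edge_swap edge_self h]
    exact zero_mem _
  · push Not at h
    exact Submodule.subset_span ⟨i, j, k, h.1, h.2.1, h.2.2.symm, polygonSum_fin_three _ _⟩

lemma orbE_subset_E0W : orbE ⊆ E0W := by
  rintro _ ⟨g, -, rfl⟩
  rw [mapW_eW, polygonSum_eq_sum_triangles edge_swap g 0]
  exact sum_mem fun i _ => polygonSum_triangle_mem_E0W _ _ _

lemma exists_mem_alternatingGroup_apply_eq {i j k : Fin 5} (hij : i ≠ j) (hjk : j ≠ k)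
    (hik : i ≠ k) : ∃ g ∈ alternatingGroup (Fin 5), g 0 = i ∧ g 1 = j ∧ g 2 = k := by
  have := alternatingGroup.isMultiplyPretransitive (Fin 5)
  rw [Nat.card_eq_fintype_card, Fintype.card_fin] at this
  have hinj : Function.Injective ![i, j, k] := by
    simp [Function.Injective, Fin.forall_fin_succ, hij, hij.symm, hjk, hjk.symm, hik, hik.symm]
  obtain ⟨g, hg⟩ := MulAction.exists_smul_eq (alternatingGroup (Fin 5))
    (Fin.castLEEmb (show 3 ≤ 5 by decide)) (⟨![i, j, k], hinj⟩ : Fin 3 ↪ Fin 5)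
  have happly (a : Fin 3) := DFunLike.congr_fun hg a
  exact ⟨g, g.2, happly 0, happly 1, happly 2⟩

lemma polygonSum_triangle_eq_sum_mapW_eW (g : Equiv.Perm (Fin 5)) :
    polygonSum edge ![g 0, g 1, g 2] =
      mapW (g * c[2, 4, 3]) eW + mapW (g * c[0, 1, 2, 4, 3]) eW +
        mapW (g * c[0, 2, 4, 3, 1]) eW := by
  have hthree : ⇑(c[2, 4, 3] : Equiv.Perm (Fin 5)) = ![0, 1, 4, 2, 3] := by decide
  have hfive₁ : ⇑(c[0, 1, 2, 4, 3] : Equiv.Perm (Fin 5)) = ![1, 2, 4, 0, 3] := by decide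
  have hfive₂ : ⇑(c[0, 2, 4, 3, 1] : Equiv.Perm (Fin 5)) = ![2, 0, 4, 1, 3] := by decide
  simp only [mapW_eW, Equiv.Perm.coe_mul, hthree, hfive₁, hfive₂, ← FinVec.map_eq]
  exact polygonSum_triangle_eq_sum_pentagons edge_swap (g 0) (g 1) (g 2) (g 4) (g 3)

lemma E0W_le_span_orbE : E0W ≤ Submodule.span ℤ orbE := by
  rw [E0W, Submodule.span_le]
  rintro _ ⟨i, j, k, hij, hjk, hik, rfl⟩
  obtain ⟨g, hg, rfl, rfl, rfl⟩ := exists_mem_alternatingGroup_apply_eq hij hjk hik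
  have horbit {c : Equiv.Perm (Fin 5)} (hc : Equiv.Perm.sign c = 1) :
      mapW (g * c) eW ∈ Submodule.span ℤ orbE :=
    Submodule.subset_span ⟨g * c, mul_mem hg (Equiv.Perm.mem_alternatingGroup.mpr hc), rfl⟩
  have htriangle : polygonSum edge ![g 0, g 1, g 2] ∈ Submodule.span ℤ orbE := by
    rw [polygonSum_triangle_eq_sum_mapW_eW]
    exact add_mem (add_mem (horbit (by decide)) (horbit (by decide))) (horbit (by decide))
  rwa [polygonSum_fin_three] at htriangle

lemma five_smul_mem_E0W (x : Wmod) : (5 : ℤ) • x ∈ E0W := by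
  have hedge (i j : Fin 5) : (5 : ℤ) • edge i j ∈ E0W := by
    have h := sum_polygonSum_triangle edge_swap i j
    rw [sum_edge, sum_edge, add_zero, sub_zero, Fintype.card_fin] at h
    rw [ofNat_smul_eq_nsmul ℤ 5, ← h]
    exact sum_mem fun k _ => polygonSum_triangle_mem_E0W i j k
  have htop : ⊤ ≤ E0W.comap (LinearMap.lsmul ℤ Wmod 5) := by
    rw [← span_range_edge, Submodule.span_le]
    rintro _ ⟨p, rfl⟩
    exact hedge p.1 p.2
  exact htop Submodule.mem_top

lemma span_orbE : Submodule.span ℤ orbE = E0W :=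
  le_antisymm (Submodule.span_le.mpr orbE_subset_E0W) E0W_le_span_orbE

lemma span_range_axisVector : Submodule.span ℤ (Set.range axisVector) = E0W := by
  rw [← span_range_union_range_neg, ← orbE_eq_range_union_range_neg, span_orbE]

lemma linearIndependent_axisVector : LinearIndependent ℤ axisVector := by
  rw [linearIndependent_iff_card_le_finrank_span, Set.finrank, span_range_axisVector,
    Fintype.card_fin, ← finrank_Wmod]
  exact finrank_le_finrank_of_smul_mem (by decide) five_smul_mem_E0W

/-- The 5-cycle `(01234)` fixes `e` and the even permutation `(14)(23)` sends `e` to `−e`;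
the `A₅`-orbit of `e` has exactly 12 elements and is closed under negation (6 antipodal
pairs); this orbit spans `E₀` over `ℤ`; and one may select one element from each antipodal
pair so that the resulting 6 elements form a `ℤ`-basis of `E₀` (they are linearly
independent and span `E₀`). -/
theorem orbit_of_e_in_wedge :
    mapW (finRotate 5) eW = eW ∧
    mapW (Equiv.swap 1 4 * Equiv.swap 2 3) eW = -eW ∧
    Set.ncard orbE = 12 ∧
    (∀ x ∈ orbE, -x ∈ orbE) ∧
    Submodule.span ℤ orbE = E0W ∧
    ∃ t : Fin 6 → Wmod,
      (∀ m, t m ∈ orbE) ∧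
      orbE = Set.range t ∪ Set.range (fun m => -t m) ∧
      Set.range t ∩ Set.range (fun m => -t m) = ∅ ∧
      LinearIndependent ℤ t ∧
      Submodule.span ℤ (Set.range t) = E0W := by
  have hrotate : finRotate 5 = 1 * Equiv.addRight 1 := by decide
  have hreflect : (Equiv.swap 1 4 * Equiv.swap 2 3 : Equiv.Perm (Fin 5)) =
      1 * Equiv.subLeft 0 := by decide
  have hone : mapW 1 eW = eW := mapW_eW 1
  refine ⟨?_, ?_, ?_, fun x => neg_mem_orbE, span_orbE, axisVector, axisVector_mem_orbE,
    orbE_eq_range_union_range_neg, range_inter_range_neg_eq_empty linearIndependent_axisVector,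
    linearIndependent_axisVector, span_range_axisVector⟩
  · rw [hrotate, mapW_mul_addRight_eW, hone]
  · rw [hreflect, mapW_mul_subLeft_eW, hone]
  · rw [orbE_eq_range_union_range_neg, ncard_range_union_range_neg linearIndependent_axisVector,
      Fintype.card_fin]
end

section
/- The set of additive (ℤ-linear) maps h : E₀ → N₅ satisfying h(σ₅x) = π₅·h(x) and h(σ₂x) = π₂·h(x) for all x ∈ E₀ is, under pointwise addition, a group with exactly 5 elements. Equivalently: there is a nonzero such equivariant map ψ (necessarily surjective), and every such equivariant map is an F₅-scalar multiple of ψ. -/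
/-!
In the coordinate `y = x - 1` on `{0, …, 4} = 𝔽₅`, the permutation `(01234)` is `y ↦ y + 1` and
`(04)(23)` is `y ↦ 2y³`. Writing a function on `𝔽₅` as `f = ∑ₐ f(a) (1 - (y - a)⁴)` shows that those
with sum zero are the polynomials of degree at most `3`, so `N₅` has the basis `y, y², y³`, on which
the generators act by explicit `3 × 3` matrices. On the side of `E₀`, the indices `{∞} ∪ 𝔽₅` of the
basis form a projective line, on which `σ₅` is `k ↦ k + 1` and `σ₂` is `k ↦ -1/k` up to the sign
given by the quadratic character of `k`.

Since `σ₂ e = e₀` and `σ₅ eₖ = eₖ₊₁`, an equivariant map is determined by the image of `e`, which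
`π₅` fixes because `σ₅` fixes `e`; the fixed space of `π₅` is the line spanned by `y`. Conversely
`e ↦ y` extends to the equivariant map `eₖ ↦ 2(y - k)³ = k²y - ky² + 2y³` (modulo constants), and
the images of `e`, `e₀`, `e₁` span `N₅`.
-/

/-- The coordinate-sum functional on `(𝔽₅)⁵`. -/
def sumLin : (Fin 5 → ZMod 5) →ₗ[ZMod 5] ZMod 5 where
  toFun v := ∑ i, v i
  map_add' x y := by simp [Finset.sum_add_distrib]
  map_smul' c x := by simp [Finset.mul_sum]

/-- The subspace `{v : (Fin 5 → 𝔽₅) | v₀ + v₁ + v₂ + v₃ + v₄ = 0}`. -/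
def S0 : Submodule (ZMod 5) (Fin 5 → ZMod 5) := LinearMap.ker sumLin

/-- The constant vector `(1,1,1,1,1)`, as an element of `S0`. -/
def cvec : S0 := ⟨fun _ => 1, by simp [S0, LinearMap.mem_ker, sumLin]; decide⟩

/-- The line spanned by the constant vector. -/
def Lline : Submodule (ZMod 5) S0 := Submodule.span (ZMod 5) {cvec}

/-- `N₅`: the quotient of `{Σᵢ vᵢ = 0} ⊂ (𝔽₅)⁵` by the line spanned by `(1,1,1,1,1)`. -/
abbrev N5 := S0 ⧸ Lline

/-- The action of a permutation of the five coordinates on `S0`. -/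
def permS (g : Equiv.Perm (Fin 5)) : S0 →ₗ[ZMod 5] S0 :=
  LinearMap.restrict (LinearMap.funLeft (ZMod 5) (ZMod 5) ⇑g⁻¹)
    (fun v hv => by
      simp only [S0, LinearMap.mem_ker, sumLin, LinearMap.coe_mk, AddHom.coe_mk,
        LinearMap.funLeft_apply] at hv ⊢
      rw [Equiv.sum_comp g⁻¹ v]
      exact hv)

/-- The induced action of a permutation of the five coordinates on `N₅`. -/
def permN (g : Equiv.Perm (Fin 5)) : N5 →ₗ[ZMod 5] N5 :=
  Submodule.mapQ Lline Lline (permS g) (by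
    rw [Lline, Submodule.span_le, Set.singleton_subset_iff]
    have h : permS g cvec = cvec := by
      apply Subtype.ext
      rfl
    simp only [SetLike.mem_coe, Submodule.mem_comap, h]
    exact Submodule.subset_span rfl)

/-- Index type for the basis `e, e₀, …, e₄` of `V`: `none ↦ e`, `some i ↦ eᵢ`. -/
abbrev J5 := Option (ZMod 5)

/-- The 6-dimensional `ℚ`-vector space `V` with basis indexed by `J5`. -/
abbrev V := J5 → ℚ

/-- The basis vector of `V` with index `j`. -/
def bvec : J5 → V := fun j => Pi.single j 1

/-- `E₀ ⊂ V`: the `ℤ`-span of the basis `{e, e₀, …, e₄}`. -/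
def E0 : Submodule ℤ V := Submodule.span ℤ (Set.range bvec)

/-- Index rotation `some i ↦ some (i+1)`, `none ↦ none`. -/
def rotIdx : J5 ≃ J5 := Equiv.optionCongr (Equiv.addRight (1 : ZMod 5))

/-- `σ₅ : V ≃ V`, with `σ₅(e) = e` and `σ₅(eᵢ) = e_{i+1}`; it realizes the
permutation `(01234)`. -/
def s5 : V ≃ₗ[ℚ] V := LinearEquiv.funCongrLeft ℚ ℚ rotIdx.symm

/-- Index involution underlying `σ₂`. -/
def t2 : J5 → J5
  | none => some 0
  | some i => if i = 0 then none else if i = 1 then some 4 else if i = 4 then some 1 else some i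

/-- Sign function underlying `σ₂`. -/
def sg2 : J5 → ℚ := fun j => if j = some 2 ∨ j = some 3 then -1 else 1

/-- The function underlying `σ₂`. -/
def s2fun : V → V := fun x j => sg2 j * x (t2 j)

lemma t2_invol : ∀ j, t2 (t2 j) = j := by decide

lemma sg2_mul : ∀ j, sg2 j * sg2 (t2 j) = 1 := by
  intro j
  rcases j with _ | i
  · simp (config := { decide := true }) [sg2, t2]
  · fin_cases i <;> simp (config := { decide := true }) [sg2, t2]

lemma s2fun_invol : Function.Involutive s2fun := by
  intro x
  funext j
  show sg2 j * (sg2 (t2 j) * x (t2 (t2 j))) = x j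
  rw [t2_invol, ← mul_assoc, sg2_mul, one_mul]

/-- `σ₂ : V ≃ V`, with `σ₂(e) = e₀`, `σ₂(e₀) = e`, `σ₂(e₁) = e₄`, `σ₂(e₄) = e₁`,
`σ₂(e₂) = −e₂`, `σ₂(e₃) = −e₃`; it realizes the permutation `(04)(23)`. -/
def s2 : V ≃ₗ[ℚ] V where
  toFun := s2fun
  invFun := s2fun
  left_inv := s2fun_invol
  right_inv := s2fun_invol
  map_add' x y := by funext j; simp [s2fun, mul_add]
  map_smul' c x := by funext j; simp [s2fun]; ring

/-- `π₅`: the action of the 5-cycle `(01234)` on `N₅`. -/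
def pi5 : N5 →ₗ[ZMod 5] N5 := permN (finRotate 5)

/-- `π₂`: the action of `(04)(23)` on `N₅`. -/
def pi2 : N5 →ₗ[ZMod 5] N5 := permN (Equiv.swap 0 4 * Equiv.swap 2 3)

/-- The equivariance condition on an additive map `h : E₀ → N₅`:
`h(σ₅ x) = π₅·h(x)` and `h(σ₂ x) = π₂·h(x)` for all `x ∈ E₀`. -/
def EquivCond (h : E0 →+ N5) : Prop :=
  (∀ x y : E0, s5 (x : V) = (y : V) → h y = pi5 (h x)) ∧
  (∀ x y : E0, s2 (x : V) = (y : V) → h y = pi2 (h x))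

section FiniteField

variable {F : Type*} [Field F] [Fintype F]

lemma sum_pow_mul_pow_card_sub_one_sub [DecidableEq F] (x y : F) :
    ∑ k ∈ Finset.range (Fintype.card F), x ^ k * y ^ (Fintype.card F - 1 - k) =
      if y = x then 0 else 1 := by
  split_ifs with hyx
  · rw [hyx, geom_sum₂_self, FiniteField.cast_card_eq_zero, zero_mul]
  · have hxy : x - y ≠ 0 := sub_ne_zero.2 (Ne.symm hyx)
    apply mul_right_cancel₀ hxy
    rw [geom_sum₂_mul, FiniteField.pow_card, FiniteField.pow_card, one_mul]

lemma eq_sum_sub_sum_pow_mul_moment (f : F → F) (x : F) :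
    f x = ∑ y, f y - ∑ k ∈ Finset.range (Fintype.card F),
      x ^ k * ∑ y, y ^ (Fintype.card F - 1 - k) * f y := by
  classical
  have hmoments : ∑ k ∈ Finset.range (Fintype.card F),
      x ^ k * ∑ y, y ^ (Fintype.card F - 1 - k) * f y = ∑ y, (if y = x then 0 else 1) * f y := by
    simp only [← sum_pow_mul_pow_card_sub_one_sub x, Finset.mul_sum, Finset.sum_mul, mul_assoc]
    exact Finset.sum_comm
  have hdelta (y : F) : f y - (if y = x then 0 else 1) * f y = if y = x then f y else 0 := by
    split_ifs <;> ring
  simp only [hmoments, ← Finset.sum_sub_distrib, hdelta, Finset.sum_ite_eq', Finset.mem_univ,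
    if_true]

end FiniteField

lemma eq_apply_of_span_eq_top {R M A ι : Type*} [Semiring R] [AddCommMonoid M] [Module R M]
    [AddCommMonoid A] [Module R A] {N : Submodule R M} {b : ι → N}
    (hb : Submodule.span R (Set.range b) = ⊤) (s : N →ₗ[R] M) (p : A →ₗ[R] A) (h : N →ₗ[R] A)
    (hs : ∀ i, ∃ y : N, s (b i) = y ∧ h y = p (h (b i))) (x y : N) (hxy : s x = y) :
    h y = p (h x) := by
  suffices ∃ z : N, s x = z ∧ h z = p (h x) by
    obtain ⟨z, hz, hhz⟩ := this
    rwa [Subtype.ext (hxy.symm.trans hz)]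
  have hx : x ∈ Submodule.span R (Set.range b) := hb ▸ Submodule.mem_top
  clear hxy
  induction hx using Submodule.span_induction with
  | mem _ hmem =>
    obtain ⟨i, rfl⟩ := hmem
    exact hs i
  | zero => exact ⟨0, by simp only [map_zero, Submodule.coe_zero], by simp only [map_zero]⟩
  | add x₁ x₂ _ _ ih₁ ih₂ =>
    obtain ⟨z₁, hz₁, hhz₁⟩ := ih₁
    obtain ⟨z₂, hz₂, hhz₂⟩ := ih₂
    exact ⟨z₁ + z₂, by rw [map_add, hz₁, hz₂, Submodule.coe_add],
      by rw [map_add, hhz₁, hhz₂, map_add, map_add]⟩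
  | smul r x _ ih =>
    obtain ⟨z, hz, hhz⟩ := ih
    exact ⟨r • z, by rw [map_smul, hz, Submodule.coe_smul],
      by rw [map_smul, hhz, map_smul, map_smul]⟩

section PrimeFive

lemma fact_prime_five : Fact (Nat.Prime 5) := ⟨Nat.prime_five⟩

attribute [local instance] fact_prime_five

namespace N5

lemma mk_eq_mk_iff {v w : S0} : (Submodule.Quotient.mk v : N5) = Submodule.Quotient.mk w ↔
    ∃ c : ZMod 5, ∀ i, v.1 i = w.1 i + c := by
  rw [Submodule.Quotient.eq, Lline, Submodule.mem_span_singleton]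
  refine exists_congr fun c => ?_
  rw [Subtype.ext_iff, funext_iff]
  refine forall_congr' fun i => ?_
  change c * 1 = v.1 i - w.1 i ↔ _
  rw [mul_one, eq_comm, sub_eq_iff_eq_add']

/-- The function `a₀ y + a₁ y² + a₂ y³` of `x ∈ {0, …, 4}`, where `y = x - 1`; the shift by `1`
turns the permutation `(04)(23)` into the monomial map `y ↦ 2y³`. -/
def cubic (a : Fin 3 → ZMod 5) (x : ZMod 5) : ZMod 5 :=
  a 0 * (x - 1) + a 1 * (x - 1) ^ 2 + a 2 * (x - 1) ^ 3

lemma sum_cubic (a : Fin 3 → ZMod 5) : ∑ x, cubic a x = 0 := by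
  have hpow {d : ℕ} (hd : d < 4) : ∑ x : ZMod 5, (x - 1) ^ d = 0 := by
    refine (Equiv.sum_comp (Equiv.subRight (1 : ZMod 5)) (· ^ d)).trans ?_
    exact FiniteField.sum_pow_lt_card_sub_one (ZMod 5) d (by rwa [ZMod.card])
  have hlin : ∑ x : ZMod 5, (x - 1) = 0 := by simpa only [pow_one] using hpow (d := 1) (by decide)
  simp only [cubic, Finset.sum_add_distrib, ← Finset.mul_sum, hlin, hpow (d := 2) (by decide),
    hpow (d := 3) (by decide), mul_zero, add_zero]

/-- The class in `N₅` of the function `a₀ y + a₁ y² + a₂ y³`, where `y = x - 1`: the vectors `a` are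
the coordinates on `N₅` used in all computations. -/
def ofCoeff : (Fin 3 → ZMod 5) →ₗ[ZMod 5] N5 where
  toFun a := Submodule.Quotient.mk ⟨cubic a, sum_cubic a⟩
  map_add' a b := congrArg Submodule.Quotient.mk <| Subtype.ext <| funext fun x => by
    change cubic (a + b) x = cubic a x + cubic b x
    simp only [cubic, Pi.add_apply]
    ring
  map_smul' c a := congrArg Submodule.Quotient.mk <| Subtype.ext <| funext fun x => by
    change cubic (c • a) x = c * cubic a x
    simp only [cubic, Pi.smul_apply, smul_eq_mul]
    ring

lemma ofCoeff_injective : Function.Injective ofCoeff := by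
  rw [injective_iff_map_eq_zero]
  intro a ha
  obtain ⟨c, hc⟩ := mk_eq_mk_iff.1 (ha.trans (map_zero ofCoeff).symm)
  have hval (x : ZMod 5) : a 0 * (x - 1) + a 1 * (x - 1) ^ 2 + a 2 * (x - 1) ^ 3 = c := by
    simpa [cubic] using hc x
  have hc0 : c = 0 := by linear_combination -hval 1
  have h5 : (5 : ZMod 5) = 0 := rfl
  have h1 : a 1 = 0 := by linear_combination 3 * hval 2 + 3 * hval 0 + 6 * hc0 - a 1 * h5
  have h2 : a 2 = 0 := by
    linear_combination hval 3 - 2 * hval 2 - 2 * h1 - hc0 - a 2 * h5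
  have h0 : a 0 = 0 := by linear_combination hval 2 - h1 - h2 + hc0
  funext i
  fin_cases i
  exacts [h0, h1, h2]

lemma exists_eq_ofCoeff (n : N5) : ∃ a₀ a₁ a₂, n = ofCoeff ![a₀, a₁, a₂] := by
  obtain ⟨⟨v, hv⟩, rfl⟩ := Submodule.Quotient.mk_surjective Lline n
  let f : ZMod 5 → ZMod 5 := fun y => v (y + 1 : ZMod 5)
  let moment (d : ℕ) : ZMod 5 := ∑ y, y ^ d * f y
  have hf : ∑ y, f y = 0 := (Equiv.sum_comp (Equiv.addRight (1 : ZMod 5)) v).trans hv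
  refine ⟨-moment 3, -moment 2, -moment 1, mk_eq_mk_iff.2 ⟨-moment 4, fun (x : ZMod 5) => ?_⟩⟩
  change v x = cubic _ x + -moment 4
  have hvx : v x = f (x - 1) := congrArg v (sub_add_cancel x 1).symm
  rw [hvx, eq_sum_sub_sum_pow_mul_moment f, hf, ZMod.card]
  simp only [Finset.sum_range_succ, Finset.sum_range_zero, cubic, moment, Nat.reduceSub, pow_zero,
    one_mul, hf, Matrix.cons_val]
  ring

lemma permN_ofCoeff {g : Equiv.Perm (Fin 5)} {s : ZMod 5 → ZMod 5} (hg : ⇑g⁻¹ = s)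
    {a b : Fin 3 → ZMod 5} (c : ZMod 5) (h : ∀ x, cubic a (s x) = cubic b x + c) :
    permN g (ofCoeff a) = ofCoeff b := by
  subst hg
  exact mk_eq_mk_iff.2 ⟨c, h⟩

lemma pi5_ofCoeff (a₀ a₁ a₂ : ZMod 5) :
    pi5 (ofCoeff ![a₀, a₁, a₂]) = ofCoeff ![a₀ - 2 * a₁ + 3 * a₂, a₁ - 3 * a₂, a₂] := by
  have hrotate : ⇑(finRotate 5)⁻¹ = (fun x => x - 1 : ZMod 5 → ZMod 5) := funext (by decide)
  refine permN_ofCoeff hrotate (-a₀ + a₁ - a₂) fun x => ?_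
  simp only [cubic, Matrix.cons_val]
  ring

lemma pi2_ofCoeff (a₀ a₁ a₂ : ZMod 5) :
    pi2 (ofCoeff ![a₀, a₁, a₂]) = ofCoeff ![3 * a₂, -a₁, 2 * a₀] := by
  have hcube : ⇑(Equiv.swap 0 4 * Equiv.swap 2 3 : Equiv.Perm (Fin 5))⁻¹ =
      (fun x => 2 * (x - 1) ^ 3 + 1 : ZMod 5 → ZMod 5) := funext (by decide)
  refine permN_ofCoeff hcube 0 fun x => ?_
  have hfrob : (x - 1) ^ 5 = x - 1 := ZMod.pow_card _
  have h5 : (5 : ZMod 5) = 0 := rfl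
  simp only [cubic, add_sub_cancel_right, Matrix.cons_val]
  generalize x - 1 = y at *
  linear_combination (4 * a₁ * y + 8 * a₂ * (y ^ 4 + 1)) * hfrob + (a₁ * y ^ 2 + a₂ * y) * h5

lemma exists_eq_smul_of_pi5_eq {n : N5} (hn : pi5 n = n) :
    ∃ c : ZMod 5, n = c • ofCoeff ![1, 0, 0] := by
  obtain ⟨a₀, a₁, a₂, rfl⟩ := exists_eq_ofCoeff n
  rw [pi5_ofCoeff] at hn
  have hcoeff := ofCoeff_injective hn
  have h0 : a₀ - 2 * a₁ + 3 * a₂ = a₀ := congrFun hcoeff 0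
  have h1 : a₁ - 3 * a₂ = a₁ := congrFun hcoeff 1
  have h5 : (5 : ZMod 5) = 0 := rfl
  have ha₂ : a₂ = 0 := by linear_combination -2 * h1 - a₂ * h5
  have ha₁ : a₁ = 0 := by linear_combination 2 * h0 - 6 * ha₂ + a₁ * h5
  refine ⟨a₀, ?_⟩
  rw [← map_smul, Matrix.smul_vec3, ha₁, ha₂]
  simp only [smul_eq_mul, mul_one, mul_zero]

end N5

namespace E0

lemma linearIndependent_bvec : LinearIndependent ℤ bvec := by
  have hbvec : bvec = Pi.basisFun ℚ J5 := funext fun j => (Pi.basisFun_apply ℚ J5 j).symm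
  rw [hbvec]
  exact (Pi.basisFun ℚ J5).linearIndependent.restrict_scalars' ℤ

/-- The `ℤ`-basis `e, e₀, …, e₄` of `E₀`. -/
noncomputable def basis : Module.Basis J5 ℤ E0 := Module.Basis.span linearIndependent_bvec

lemma coe_basis (j : J5) : (basis j : V) = bvec j :=
  congrArg Subtype.val (Module.Basis.span_apply linearIndependent_bvec j)

lemma addHom_ext {A : Type*} [AddCommGroup A] {f g : E0 →+ A}
    (h : ∀ j, f (basis j) = g (basis j)) : f = g :=
  AddMonoidHom.toIntLinearMap_injective (basis.ext h)

lemma s5_bvec (j : J5) : s5 (bvec j) = bvec (rotIdx j) := by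
  funext i
  change (Pi.single j 1 : V) (rotIdx.symm i) = (Pi.single (rotIdx j) 1 : V) i
  simp only [Pi.single_apply, Equiv.symm_apply_eq]

lemma s2_bvec (j : J5) : s2 (bvec j) = sg2 j • bvec (t2 j) := by
  funext i
  change sg2 i * (Pi.single j 1 : V) (t2 i) = sg2 j * (Pi.single (t2 j) 1 : V) i
  have hsign : ∀ j, sg2 (t2 j) = sg2 j := by decide
  by_cases hi : i = t2 j
  · rw [hi, t2_invol, hsign, Pi.single_eq_same, Pi.single_eq_same]
  · have hj : t2 i ≠ j := fun hj => hi (by rw [← hj, t2_invol])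
    rw [Pi.single_eq_of_ne hj, Pi.single_eq_of_ne hi, mul_zero, mul_zero]

lemma s5_basis_none : s5 (basis none) = basis none := by
  rw [coe_basis, s5_bvec]
  rfl

lemma s5_basis_some (k : ZMod 5) : s5 (basis (some k)) = basis (some (k + 1)) := by
  rw [coe_basis, coe_basis, s5_bvec]
  rfl

lemma s2_basis_none : s2 (basis none) = basis (some 0) := by
  rw [coe_basis, coe_basis, s2_bvec]
  exact one_smul ℚ _

lemma s2_basis_zero : s2 (basis (some 0)) = basis none := by
  rw [coe_basis, coe_basis, s2_bvec]
  exact one_smul ℚ _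

lemma s2_basis_some {k : ZMod 5} (hk : k ≠ 0) :
    s2 (basis (some k)) = (quadraticChar (ZMod 5) k • basis (some (-k⁻¹)) : E0) := by
  have hinv : k⁻¹ = k ^ 3 := by
    have hfermat : k ^ 4 = 1 := ZMod.pow_card_sub_one_eq_one hk
    exact inv_eq_of_mul_eq_one_right (by rw [← pow_succ', hfermat])
  have hindex : ∀ k : ZMod 5, k ≠ 0 → t2 (some k) = some (-k ^ 3) := by decide
  have hsign : ∀ k : ZMod 5, k ≠ 0 → sg2 (some k) = (quadraticChar (ZMod 5) k : ℚ) := by decide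
  rw [Submodule.coe_smul, coe_basis, coe_basis, s2_bvec, hindex k hk, hsign k hk, hinv,
    Int.cast_smul_eq_zsmul]

end E0

lemma quadraticChar_zmod_five_smul {M : Type*} [AddCommGroup M] [Module (ZMod 5) M] (k : ZMod 5)
    (m : M) : quadraticChar (ZMod 5) k • m = k ^ 2 • m := by
  have hchar : ringChar (ZMod 5) ≠ 2 := by
    rw [ZMod.ringChar_zmod_n]
    decide
  rw [← Int.cast_smul_eq_zsmul (ZMod 5), quadraticChar_eq_pow_of_char_ne_two' hchar, ZMod.card]

namespace EquivCond

lemma iff_basis {h : E0 →+ N5} : EquivCond h ↔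
    (h (E0.basis none) = pi5 (h (E0.basis none)) ∧
      ∀ k, h (E0.basis (some (k + 1))) = pi5 (h (E0.basis (some k)))) ∧
    h (E0.basis (some 0)) = pi2 (h (E0.basis none)) ∧
    h (E0.basis none) = pi2 (h (E0.basis (some 0))) ∧
    ∀ k ≠ 0, k ^ 2 • h (E0.basis (some (-k⁻¹))) = pi2 (h (E0.basis (some k))) := by
  have hchar (k : ZMod 5) : h (quadraticChar (ZMod 5) k • E0.basis (some (-k⁻¹))) =
      k ^ 2 • h (E0.basis (some (-k⁻¹))) := by rw [map_zsmul, quadraticChar_zmod_five_smul]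
  constructor
  · rintro ⟨h5, h2⟩
    refine ⟨⟨h5 _ _ E0.s5_basis_none, fun k => h5 _ _ (E0.s5_basis_some k)⟩,
      h2 _ _ E0.s2_basis_none, h2 _ _ E0.s2_basis_zero, fun k hk => ?_⟩
    rw [← hchar]
    exact h2 _ _ (E0.s2_basis_some hk)
  · rintro ⟨⟨h5e, h5⟩, h2e, h20, h2⟩
    constructor
    · refine eq_apply_of_span_eq_top E0.basis.span_eq
        ((s5.toLinearMap.restrictScalars ℤ).domRestrict E0)
        pi5.toAddMonoidHom.toIntLinearMap h.toIntLinearMap fun j => ?_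
      match j with
      | none => exact ⟨_, E0.s5_basis_none, h5e⟩
      | some k => exact ⟨_, E0.s5_basis_some k, h5 k⟩
    · refine eq_apply_of_span_eq_top E0.basis.span_eq
        ((s2.toLinearMap.restrictScalars ℤ).domRestrict E0)
        pi2.toAddMonoidHom.toIntLinearMap h.toIntLinearMap fun j => ?_
      match j with
      | none => exact ⟨_, E0.s2_basis_none, h2e⟩
      | some k =>
        obtain rfl | hk := eq_or_ne k 0
        · exact ⟨_, E0.s2_basis_zero, h20⟩
        · exact ⟨_, E0.s2_basis_some hk, (hchar k).trans (h2 k hk)⟩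

lemma smul {h : E0 →+ N5} (hh : EquivCond h) (c : ZMod 5) : EquivCond (c • h) := by
  refine ⟨fun x y hxy => ?_, fun x y hxy => ?_⟩
  · rw [AddMonoidHom.smul_apply, AddMonoidHom.smul_apply, hh.1 x y hxy, map_smul]
  · rw [AddMonoidHom.smul_apply, AddMonoidHom.smul_apply, hh.2 x y hxy, map_smul]

lemma ext {f g : E0 →+ N5} (hf : EquivCond f) (hg : EquivCond g)
    (hfg : f (E0.basis none) = g (E0.basis none)) : f = g := by
  obtain ⟨⟨-, hf5⟩, hf2, -⟩ := iff_basis.1 hf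
  obtain ⟨⟨-, hg5⟩, hg2, -⟩ := iff_basis.1 hg
  have hnat (k : ℕ) : f (E0.basis (some k)) = g (E0.basis (some k)) := by
    induction k with
    | zero => rw [Nat.cast_zero, hf2, hg2, hfg]
    | succ k ih => rw [Nat.cast_succ, hf5, hg5, ih]
  refine E0.addHom_ext fun j => ?_
  match j with
  | none => exact hfg
  | some k => simpa only [ZMod.natCast_zmod_val] using hnat k.val

end EquivCond

/-- The values of `psi` on the basis vectors: `e ↦ y` and `eₖ ↦ 2(y - k)³ = k²y - ky² + 2y³`, modulo
constants. -/
def psiValue : J5 → N5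
  | none => N5.ofCoeff ![1, 0, 0]
  | some k => N5.ofCoeff ![k ^ 2, -k, 2]

/-- The equivariant map `E₀ → N₅` sending `e` to the class of `y`. -/
noncomputable def psi : E0 →+ N5 := (E0.basis.constr ℤ psiValue).toAddMonoidHom

lemma psi_basis_none : psi (E0.basis none) = N5.ofCoeff ![1, 0, 0] :=
  E0.basis.constr_basis ℤ psiValue none

lemma psi_basis_some (k : ZMod 5) : psi (E0.basis (some k)) = N5.ofCoeff ![k ^ 2, -k, 2] :=
  E0.basis.constr_basis ℤ psiValue (some k)

lemma equivCond_psi : EquivCond psi := by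
  have h5 : (5 : ZMod 5) = 0 := rfl
  simp only [EquivCond.iff_basis, psi_basis_none, psi_basis_some, N5.pi5_ofCoeff, N5.pi2_ofCoeff,
    ← map_smul, Matrix.smul_vec3, smul_eq_mul]
  refine ⟨⟨?_, fun k => ?_⟩, ?_, ?_, fun k hk => ?_⟩
  · exact congrArg N5.ofCoeff (Matrix.vec3_eq (by ring) (by ring) rfl)
  · exact congrArg N5.ofCoeff
      (Matrix.vec3_eq (by linear_combination -h5) (by linear_combination h5) rfl)
  · exact congrArg N5.ofCoeff (Matrix.vec3_eq (by ring) rfl (by ring))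
  · exact congrArg N5.ofCoeff (Matrix.vec3_eq (by linear_combination -h5) (by ring) (by ring))
  · have hlinear : k ^ 2 * (-k⁻¹) ^ 2 = 3 * 2 := by
      field_simp
      linear_combination -h5
    have hquadratic : k ^ 2 * -(-k⁻¹) = - -k := by field_simp
    exact congrArg N5.ofCoeff (Matrix.vec3_eq hlinear hquadratic (mul_comm _ _))

lemma psi_ne_zero : psi ≠ 0 := by
  intro hpsi
  have hcoeff : N5.ofCoeff ![1, 0, 0] = N5.ofCoeff 0 := by
    rw [← psi_basis_none, hpsi, AddMonoidHom.zero_apply, map_zero]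
  exact one_ne_zero (congrFun (N5.ofCoeff_injective hcoeff) 0)

lemma psi_surjective : Function.Surjective psi := by
  intro n
  obtain ⟨a₀, a₁, a₂, rfl⟩ := N5.exists_eq_ofCoeff n
  have hval (c : ZMod 5) (m : N5) : c.val • m = c • m := by
    rw [← Nat.cast_smul_eq_nsmul (ZMod 5), ZMod.natCast_zmod_val]
  have h5 : (5 : ZMod 5) = 0 := rfl
  refine ⟨(a₀ + a₁).val • E0.basis none + (a₁ + 3 * a₂).val • E0.basis (some 0) +
    (-a₁).val • E0.basis (some 1), ?_⟩
  simp only [map_add, map_nsmul, psi_basis_none, psi_basis_some, hval, ← map_smul,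
    Matrix.smul_vec3, smul_eq_mul]
  rw [← map_add, ← map_add, Matrix.vec3_add, Matrix.vec3_add]
  exact congrArg N5.ofCoeff
    (Matrix.vec3_eq (by ring) (by ring) (by linear_combination a₂ * h5))

lemma equivCond_iff_mem_span_psi {h : E0 →+ N5} :
    EquivCond h ↔ h ∈ Submodule.span (ZMod 5) {psi} := by
  rw [Submodule.mem_span_singleton]
  constructor
  · intro hh
    obtain ⟨c, hc⟩ := N5.exists_eq_smul_of_pi5_eq (EquivCond.iff_basis.1 hh).1.1.symm
    refine ⟨c, (equivCond_psi.smul c).ext hh ?_⟩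
    rw [hc, AddMonoidHom.smul_apply, psi_basis_none]
  · rintro ⟨c, rfl⟩
    exact equivCond_psi.smul c

lemma card_equivCond : Nat.card {h : E0 →+ N5 // EquivCond h} = 5 := by
  rw [Nat.card_congr (Equiv.subtypeEquivRight fun _ => equivCond_iff_mem_span_psi),
    ← Nat.card_congr (LinearEquiv.toSpanNonzeroSingleton (ZMod 5) _ psi psi_ne_zero).toEquiv,
    Nat.card_zmod]

end PrimeFive

/-- The group (under pointwise addition) of additive maps `h : E₀ → N₅` that are
equivariant for the icosahedral `A₅`-actions (`h(σ₅x) = π₅·h(x)`, `h(σ₂x) = π₂·h(x)`)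
has exactly 5 elements; equivalently, there is a surjective nonzero equivariant map `ψ`
and every equivariant map is an `𝔽₅`-scalar multiple of `ψ`. -/
theorem equivariant_maps_E0_to_N5 :
    Nat.card {h : E0 →+ N5 // EquivCond h} = 5 ∧
    ∃ ψ : E0 →+ N5, EquivCond ψ ∧ ψ ≠ 0 ∧ Function.Surjective ψ ∧
      ∀ h : E0 →+ N5, EquivCond h → ∃ c : ZMod 5, ∀ x : E0, h x = c • ψ x := by
  refine ⟨card_equivCond, psi, equivCond_psi, psi_ne_zero, psi_surjective, fun h hh => ?_⟩
  obtain ⟨c, rfl⟩ := Submodule.mem_span_singleton.1 (equivCond_iff_mem_span_psi.1 hh)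
  exact ⟨c, fun _ => rfl⟩
end
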